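/- Let A be a commutative semiring and ⋀ the exterior semialgebra over A. For every r ≥ 1 and every partition λ with at most r parts, the Schubert derivations σ_-(w) and σ̄_-(w) are mutually quasi-inverse on [x]^r_λ: σ_-(w)(σ̄_-(w)[x]^r_λ) ⪰ [x]^r_λ and σ̄_-(w)(σ_-(w)[x]^r_λ) ⪰ [x]^r_λ; that is, in each composite the coefficient of w^0 equals [x]^r_λ plus possibly a quasi-zero, and the coefficient of w^{−k} for each k ≥ 1 is a quasi-zero. -/

import Mathlib

/-!  The exterior semialgebra over a commutative semiring `A`, following
Chapman–Gatto–Rowen.  It is the free `A`-module on the basis consisting of a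
unit symbol `1` (here `none`) together with all pairs `(ε, s)` where
`ε ∈ {+1, −1}` (here a `Bool`, `true = +1`) and `s` is a strictly decreasing
nonempty tuple of natural numbers (here a nonempty `Finset ℕ`, read in
decreasing order).  -/

namespace ExtSemi

/-- The basis: `none` is the unit `1`; `some (ε, s)` is the sign `ε` times the
strictly decreasing wedge monomial on the nonempty finite set `s`. -/
abbrev XB : Type := Option (Bool × {s : Finset ℕ // s.Nonempty})

variable (A : Type*) [CommSemiring A]

/-- The exterior semialgebra `⋀`: the free `A`-module on `XB`. -/
abbrev Ext : Type _ := XB →₀ A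

/-- Sign flip on the basis; the unit is fixed. -/
def negB : XB → XB
  | none => none
  | some (ε, s) => some (!ε, s)

/-- The negation map `(−)` on `⋀`: the `A`-linear map sending `(ε, s)` to
`(−ε, s)` and fixing `1`. -/
noncomputable def neg : Ext A →ₗ[A] Ext A := Finsupp.lmapDomain A A negB

/-- The signed basis element attached to a sign and a finite set; the empty set
gives the unit (on which the negation acts trivially). -/
noncomputable def bElem (ε : Bool) (t : Finset ℕ) : Ext A :=
  if h : t.Nonempty then Finsupp.single (some (ε, ⟨t, h⟩)) 1 else Finsupp.single none 1

/-- The unit `1` of `⋀`. -/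
noncomputable def one : Ext A := Finsupp.single (none : XB) 1

/-- The generator `x^i`. -/
noncomputable def xg (i : ℕ) : Ext A := bElem A true {i}

/-- `true` iff merging the decreasing enumerations of the disjoint sets `s`, `t`
(concatenated as `s ++ t`) into a single decreasing enumeration is an even
permutation, i.e. iff the number of pairs `(a ∈ s, b ∈ t)` with `a < b` is even. -/
def mergeEven (s t : Finset ℕ) : Bool :=
  decide ((∑ a ∈ s, (t.filter (fun b => a < b)).card) % 2 = 0)

/-- Wedge product of two basis elements: concatenate the tuples and multiply the
signs (`0` if the tuples share an entry). -/
noncomputable def wB : XB → XB → Ext A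
  | none, c => Finsupp.single c 1
  | some b, none => Finsupp.single (some b) 1
  | some (ε, s), some (δ, t) =>
      if s.1 ∩ t.1 = ∅ then bElem A ((ε == δ) == mergeEven s.1 t.1) (s.1 ∪ t.1) else 0

/-- The wedge product on `⋀`, extended `A`-bilinearly from the basis. -/
noncomputable def wedge (u v : Ext A) : Ext A :=
  u.sum fun b a => v.sum fun c a' => (a * a') • wB A b c

/-- Extend a map defined on the basis `A`-linearly to all of `⋀`. -/
noncomputable def ext1 (g : XB → Ext A) (u : Ext A) : Ext A := u.sum fun b a => a • g b

/-- Quasi-zeros: elements of the form `w + (−)w`. -/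
def IsQuasiZero (q : Ext A) : Prop := ∃ w : Ext A, q = w + neg A w

/-- The surpassing relation: `u ⪯ v` iff `v = u + q` for some quasi-zero `q`. -/
def Prec (u v : Ext A) : Prop := ∃ q : Ext A, IsQuasiZero A q ∧ v = u + q

/-- Twist an element by a sign. -/
noncomputable def twist (ε : Bool) (u : Ext A) : Ext A := if ε then u else neg A u

/-- `k`-fold application of the negation map. -/
noncomputable def negpow (k : ℕ) (u : Ext A) : Ext A := if k % 2 = 0 then u else neg A u

/-- Wedge product of a list of elements of `⋀`. -/
noncomputable def wedgeL (l : List (Ext A)) : Ext A := l.foldr (wedge A) (one A)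

/-- The wedge monomial `x^{j_1} ∧ ⋯ ∧ x^{j_r}` for an arbitrary tuple. -/
noncomputable def wedgeMon (l : List ℕ) : Ext A := wedgeL A (l.map (xg A))

/-- The decreasing enumeration of a finite set of naturals. -/
def descList (s : Finset ℕ) : List ℕ := (s.sort (· ≤ ·)).reverse

/-- The contraction `∂^j ⌟` on basis elements:
`∂^j ⌟ (x^{i_1} ∧ ⋯ ∧ x^{i_r}) = Σ_k (−)^{k−1}[i_k = j]·x^{i_1} ∧ ⋯ ∧ x^{i_{k-1}} ∧ x^{i_{k+1}} ∧ ⋯ ∧ x^{i_r}`,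
`∂^j ⌟ 1 = 0`; it commutes with the negation map. -/
noncomputable def contraB (j : ℕ) : XB → Ext A
  | none => 0
  | some (ε, s) =>
      if j ∈ s.1 then
        twist A ε (negpow A ((s.1.filter (fun b => j < b)).card) (bElem A true (s.1.erase j)))
      else 0

/-- The contraction `∂^j ⌟` on `⋀`, extended `A`-linearly. -/
noncomputable def contra (j : ℕ) (u : Ext A) : Ext A := ext1 A (contraB A j) u

/-- Make an `A`-linear operator on `⋀` commuting with the negation map out of a
coefficient family on decreasing lists (`F k l` = the `k`-th coefficient on the
monomial with decreasing tuple `l`); the unit is sent to itself in degree `0`. -/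
noncomputable def hsOn (F : ℕ → List ℕ → Ext A) (k : ℕ) : XB → Ext A
  | none => if k = 0 then one A else 0
  | some (ε, s) => twist A ε (F k (descList s.1))

open Finset.Nat in
/-- Coefficient of `z^k` in `σ₊(z)` on a monomial:
`σ_k (x^{i_1} ∧ ⋯ ∧ x^{i_r}) = Σ_{k_1+⋯+k_r=k} x^{i_1+k_1} ∧ ⋯ ∧ x^{i_r+k_r}`. -/
noncomputable def sigPlusL (k : ℕ) (l : List ℕ) : Ext A :=
  ∑ c ∈ antidiagonalTuple l.length k,
    wedgeMon A (List.ofFn fun i : Fin l.length => l.get i + c i)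

/-- Coefficient of `z^k` in the Schubert derivation `σ₊(z)`. -/
noncomputable def sigPlus (k : ℕ) : Ext A → Ext A := ext1 A (hsOn A (sigPlusL A) k)

open Finset.Nat in
/-- Coefficient of `w^{−k}` in `σ₋(w)`, where `σ₋(w) x^j = Σ_{k=0}^{j} x^{j−k} w^{−k}`. -/
noncomputable def sigMinusL (k : ℕ) (l : List ℕ) : Ext A :=
  ∑ c ∈ antidiagonalTuple l.length k,
    if ∀ i, c i ≤ l.get i then
      wedgeMon A (List.ofFn fun i : Fin l.length => l.get i - c i)
    else 0

/-- Coefficient of `w^{−k}` in the Schubert derivation `σ₋(w)`. -/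
noncomputable def sigMinus (k : ℕ) : Ext A → Ext A := ext1 A (hsOn A (sigMinusL A) k)

open Finset.Nat in
/-- Coefficient of `z^{−k}` in `σ̄₋(z)`, where `σ̄₋(z) x^j = x^j + ((−)x^{j−1}) z^{−1}`
(`x^{−1} := 0`). -/
noncomputable def sbarMinusL (k : ℕ) (l : List ℕ) : Ext A :=
  negpow A k (∑ c ∈ antidiagonalTuple l.length k,
    if ∀ i, c i ≤ 1 ∧ c i ≤ l.get i then
      wedgeMon A (List.ofFn fun i : Fin l.length => l.get i - c i)
    else 0)

/-- Coefficient of `z^{−k}` in the Schubert derivation `σ̄₋(z)`. -/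
noncomputable def sbarMinus (k : ℕ) : Ext A → Ext A := ext1 A (hsOn A (sbarMinusL A) k)

open Finset.Nat in
/-- Coefficient of `w^k` in `σ̄₊(w)`, where `σ̄₊(w) x^j = x^j + ((−)x^{j+1}) w`. -/
noncomputable def sbarPlusL (k : ℕ) (l : List ℕ) : Ext A :=
  negpow A k (∑ c ∈ antidiagonalTuple l.length k,
    if ∀ i, c i ≤ 1 then
      wedgeMon A (List.ofFn fun i : Fin l.length => l.get i + c i)
    else 0)

/-- Coefficient of `w^k` in the Schubert derivation `σ̄₊(w)`. -/
noncomputable def sbarPlus (k : ℕ) : Ext A → Ext A := ext1 A (hsOn A (sbarPlusL A) k)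

/-- The basis element `[x]^r_λ = x^{r−1+λ_1} ∧ x^{r−2+λ_2} ∧ ⋯ ∧ x^{λ_r}`
attached to a partition `λ` with at most `r` parts. -/
noncomputable def xlam (r : ℕ) (lam : Fin r → ℕ) : Ext A :=
  wedgeMon A (List.ofFn fun i : Fin r => (r - 1 - (i : ℕ)) + lam i)

end ExtSemi

/-!
Over `ℤ`, in the classical exterior algebra, `σ₋(w)` and `σ̄₋(w)` are algebra homomorphisms into
polynomials in `w⁻¹`, so it suffices to compare their composites on generators, where the two
operators are genuinely inverse to each other. The semialgebra over `ℕ` maps to the classical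
exterior algebra by turning `(−)` into honest negation, and every element of the kernel is a
quasi-zero: a monomial occurs in it as often with sign `+1` as with sign `−1`. Hence the
positive-degree coefficients of both composites are quasi-zeros over `ℕ`. Their values on basis
elements have natural number coefficients, so base change along `ℕ → A` settles every `A`.
-/

namespace ExtSemi

section Basis

variable (A : Type*) [CommSemiring A]

lemma negB_involutive : Function.Involutive negB := by
  rintro (_ | ⟨ε, s⟩) <;> simp [negB]

lemma neg_single (b : XB) (a : A) :
    neg A (Finsupp.single b a) = Finsupp.single (negB b) a :=
  Finsupp.mapDomain_single

lemma neg_apply (u : Ext A) (b : XB) : neg A u b = u (negB b) := by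
  conv_lhs => rw [← negB_involutive b]
  exact Finsupp.mapDomain_apply negB_involutive.injective u (negB b)

variable {A}

lemma bElem_of_nonempty {t : Finset ℕ} (ht : t.Nonempty) (ε : Bool) :
    bElem A ε t = Finsupp.single (some (ε, ⟨t, ht⟩)) 1 :=
  dif_pos ht

lemma twist_bElem_true {t : Finset ℕ} (ht : t.Nonempty) (ε : Bool) :
    twist A ε (bElem A true t) = bElem A ε t := by
  cases ε <;> simp [twist, bElem_of_nonempty ht, neg_single, negB]

lemma negpow_zero (u : Ext A) : negpow A 0 u = u := rfl

lemma wedge_single_one (b : XB) (v : Ext A) :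
    wedge A (Finsupp.single b 1) v = Finsupp.linearCombination A (wB A b) v := by
  simp [wedge, Finsupp.linearCombination_apply]

lemma wedge_xg (a : ℕ) (v : Ext A) :
    wedge A (xg A a) v =
      Finsupp.linearCombination A (wB A (some (true, ⟨{a}, Finset.singleton_nonempty a⟩))) v := by
  rw [xg, bElem_of_nonempty (Finset.singleton_nonempty a), wedge_single_one]

lemma wedgeMon_cons (a : ℕ) (l : List ℕ) :
    wedgeMon A (a :: l) = wedge A (xg A a) (wedgeMon A l) := rfl

lemma wB_singleton (a : ℕ) (ε : Bool) (s : {s : Finset ℕ // s.Nonempty}) :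
    wB A (some (true, ⟨{a}, Finset.singleton_nonempty a⟩)) (some (ε, s)) =
      if a ∈ s.1 then 0
      else bElem A (ε == decide (Even {b ∈ s.1 | a < b}.card)) (insert a s.1) := by
  by_cases ha : a ∈ s.1
  · simp [wB, ha]
  · simp [wB, mergeEven, ha, Nat.even_iff]

lemma wedge_xg_apply_none (a : ℕ) (v : Ext A) : wedge A (xg A a) v none = 0 := by
  have wB_apply_none (c : XB) :
      wB A (some (true, ⟨{a}, Finset.singleton_nonempty a⟩)) c none = 0 := by
    rcases c with _ | ⟨ε, s⟩
    · simp [wB]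
    · rw [wB_singleton]
      split_ifs <;> simp [bElem_of_nonempty]
  simp [wedge_xg, Finsupp.linearCombination_apply, Finsupp.sum_apply, wB_apply_none]

lemma wedgeMon_apply_none {l : List ℕ} (hl : l ≠ []) : wedgeMon A l none = 0 := by
  obtain ⟨a, l, rfl⟩ := List.exists_cons_of_ne_nil hl
  exact wedge_xg_apply_none a _

lemma descList_eq_sort (s : Finset ℕ) : descList s = s.sort (· ≥ ·) := by
  refine List.Perm.eq_of_pairwise' (r := (· ≥ ·)) ?_ (s.pairwise_sort _) ?_
  · exact List.pairwise_reverse.2 (s.pairwise_sort _)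
  · exact (List.reverse_perm _).trans
      ((s.sort_perm_toList _).trans (s.sort_perm_toList _).symm)

lemma descList_insert {m : ℕ} {t : Finset ℕ} (h : ∀ x ∈ t, x < m) :
    descList (insert m t) = m :: descList t := by
  rw [descList_eq_sort, descList_eq_sort, Finset.sort_insert (· ≥ ·) (fun b hb => (h b hb).le)
    (fun hm => lt_irrefl m (h m hm))]

lemma wedgeMon_descList (t : Finset ℕ) : wedgeMon A (descList t) = bElem A true t := by
  induction t using Finset.induction_on_max with
  | empty => simp [descList, wedgeMon, wedgeL, one, bElem]
  | insert m t hm ih =>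
    rw [descList_insert hm, wedgeMon_cons, ih, wedge_xg]
    rcases t.eq_empty_or_nonempty with rfl | ht
    · simp [bElem, wB]
    · have hmt : m ∉ t := fun h => lt_irrefl m (hm m h)
      have hlarger : {b ∈ t | m < b} = ∅ := Finset.filter_eq_empty_iff.2 fun b hb => (hm b hb).asymm
      simp [bElem_of_nonempty ht, wB_singleton, hmt, hlarger]

end Basis

section QuasiZero

variable (A : Type*) [CommSemiring A]

/-- The submodule of quasi-zeros. -/
noncomputable def quasiZeros : Submodule A (Ext A) := LinearMap.range (LinearMap.id + neg A)

variable {A}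

lemma mem_quasiZeros {u : Ext A} : u ∈ quasiZeros A ↔ IsQuasiZero A u :=
  exists_congr fun _ => eq_comm

lemma isQuasiZero_of_apply_eq {u : Ext A} (h0 : u none = 0)
    (h : ∀ s, u (some (true, s)) = u (some (false, s))) : IsQuasiZero A u := by
  classical
  refine ⟨u.filter fun b => ∃ s, b = some (true, s), ?_⟩
  ext b
  rw [Finsupp.add_apply, neg_apply]
  rcases b with _ | ⟨_ | _, s⟩ <;> simp [negB, h0, h]

lemma isQuasiZero_of_forall_single (f : Ext A →ₗ[A] Ext A)
    (hf : ∀ b, IsQuasiZero A (f (Finsupp.single b 1))) (u : Ext A) : IsQuasiZero A (f u) := by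
  rw [← mem_quasiZeros]
  induction u using Finsupp.induction_linear with
  | zero => simp
  | add u v hu hv => simpa using add_mem hu hv
  | single b a =>
    simpa [← map_smul] using (quasiZeros A).smul_mem a (mem_quasiZeros.2 (hf b))

lemma prec_refl (u : Ext A) : Prec A u u :=
  ⟨0, ⟨0, by simp⟩, by simp⟩

end QuasiZero

section HasseSchmidt

variable (A : Type*) [CommSemiring A]

/-- The degree `k` coefficient of the Hasse–Schmidt derivation with coefficient family `F`, as a
linear map; `sigMinus A k` and `sbarMinus A k` are its instances at `sigMinusL A` and
`sbarMinusL A`. -/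
noncomputable def hsOp (F : ℕ → List ℕ → Ext A) (k : ℕ) : Ext A →ₗ[A] Ext A :=
  Finsupp.linearCombination A (hsOn A F k)

/-- The degree `k` coefficient of the composite of the Hasse–Schmidt derivations with coefficient
families `F` (applied last) and `G`. -/
noncomputable def hsComp (F G : ℕ → List ℕ → Ext A) (k : ℕ) : Ext A →ₗ[A] Ext A :=
  ∑ j ∈ Finset.range (k + 1), hsOp A F j ∘ₗ hsOp A G (k - j)

/-- The sum of the wedge monomials obtained from `l` by lowering the exponents by `k` in total, each
exponent `j` by at most `b j`. This is the common shape of `sigMinusL` (`b j = j`) and `sbarMinusL`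
(`b j = min 1 j`, up to sign). -/
noncomputable def lowerL (b : ℕ → ℕ) (k : ℕ) (l : List ℕ) : Ext A :=
  ∑ c ∈ Finset.Nat.antidiagonalTuple l.length k,
    if ∀ i, c i ≤ b (l.get i) then
      wedgeMon A (List.ofFn fun i : Fin l.length => l.get i - c i)
    else 0

variable {A}

lemma hsComp_apply (F G : ℕ → List ℕ → Ext A) (k : ℕ) (u : Ext A) :
    hsComp A F G k u = ∑ j ∈ Finset.range (k + 1), hsOp A F j (hsOp A G (k - j) u) := by
  simp [hsComp]

lemma sigMinusL_eq_lowerL (k : ℕ) (l : List ℕ) : sigMinusL A k l = lowerL A id k l := rfl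

lemma sbarMinusL_eq_negpow_lowerL (k : ℕ) (l : List ℕ) :
    sbarMinusL A k l = negpow A k (lowerL A (min 1) k l) := by
  simp only [sbarMinusL, lowerL, le_min_iff]

lemma lowerL_zero (b : ℕ → ℕ) (l : List ℕ) : lowerL A b 0 l = wedgeMon A l := by
  simp [lowerL, Finset.Nat.antidiagonalTuple_zero_right]

lemma lowerL_apply_none (b : ℕ → ℕ) (k : ℕ) {l : List ℕ} (hl : l ≠ []) :
    lowerL A b k l none = 0 := by
  rw [lowerL, Finsupp.finsetSum_apply]
  refine Finset.sum_eq_zero fun c _ => ?_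
  split_ifs
  · exact wedgeMon_apply_none (by simpa using hl)
  · rfl

lemma hsOp_zero {F : ℕ → List ℕ → Ext A} (hF : ∀ l, F 0 l = wedgeMon A l) (u : Ext A) :
    hsOp A F 0 u = u := by
  have hsOn_zero (b : XB) : hsOn A F 0 b = Finsupp.single b 1 := by
    rcases b with _ | ⟨ε, s, hs⟩
    · simp [hsOn, one]
    · rw [hsOn, hF, wedgeMon_descList, twist_bElem_true hs, bElem_of_nonempty hs]
  simp [hsOp, Finsupp.linearCombination_apply, hsOn_zero]

lemma sigMinus_zero (u : Ext A) : sigMinus A 0 u = u :=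
  hsOp_zero (lowerL_zero id) u

lemma sbarMinus_zero (u : Ext A) : sbarMinus A 0 u = u :=
  hsOp_zero (fun l => by rw [sbarMinusL_eq_negpow_lowerL, negpow_zero, lowerL_zero]) u

end HasseSchmidt

section BaseChange

variable {A B : Type*} [CommSemiring A] [CommSemiring B] (φ : A →+* B)

/-- Extension of scalars along `φ`, which identifies the basis of `Ext A` with that of `Ext B`. -/
noncomputable def baseChange : Ext A →+ Ext B :=
  Finsupp.mapRange.addMonoidHom φ.toAddMonoidHom

lemma baseChange_single (b : XB) (a : A) :
    baseChange φ (Finsupp.single b a) = Finsupp.single b (φ a) := by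
  simp [baseChange]

lemma baseChange_linearCombination (g : XB → Ext A) (u : Ext A) :
    baseChange φ (Finsupp.linearCombination A g u) =
      Finsupp.linearCombination B (fun b => baseChange φ (g b)) (baseChange φ u) := by
  have baseChange_smul (a : A) (v : Ext A) : baseChange φ (a • v) = φ a • baseChange φ v := by
    ext b
    simp [baseChange]
  induction u using Finsupp.induction_linear with
  | zero => simp
  | add u v hu hv => simp [hu, hv]
  | single b a => simp [baseChange_single, baseChange_smul]

lemma baseChange_neg (u : Ext A) : baseChange φ (neg A u) = neg B (baseChange φ u) := by
  induction u using Finsupp.induction_linear with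
  | zero => simp
  | add u v hu hv => simp [hu, hv]
  | single b a => simp [baseChange_single, neg_single]

lemma baseChange_twist (ε : Bool) (u : Ext A) :
    baseChange φ (twist A ε u) = twist B ε (baseChange φ u) := by
  cases ε <;> simp [twist, baseChange_neg]

lemma baseChange_negpow (k : ℕ) (u : Ext A) :
    baseChange φ (negpow A k u) = negpow B k (baseChange φ u) := by
  unfold negpow
  split_ifs <;> simp [baseChange_neg]

lemma baseChange_bElem (ε : Bool) (t : Finset ℕ) :
    baseChange φ (bElem A ε t) = bElem B ε t := by
  unfold bElem
  split_ifs <;> simp [baseChange_single]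

lemma baseChange_one : baseChange φ (one A) = one B := by
  simp [one, baseChange_single]

lemma baseChange_wB (b c : XB) : baseChange φ (wB A b c) = wB B b c := by
  rcases b with _ | ⟨ε, s⟩ <;> rcases c with _ | ⟨δ, t⟩
  all_goals simp [wB, baseChange_single, apply_ite (baseChange φ), baseChange_bElem]

lemma baseChange_wedgeMon (l : List ℕ) : baseChange φ (wedgeMon A l) = wedgeMon B l := by
  induction l with
  | nil => exact baseChange_one φ
  | cons a l ih =>
    simp [wedgeMon_cons, wedge_xg, baseChange_linearCombination, baseChange_wB, ih]

lemma baseChange_lowerL (b : ℕ → ℕ) (k : ℕ) (l : List ℕ) :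
    baseChange φ (lowerL A b k l) = lowerL B b k l := by
  simp [lowerL, apply_ite (baseChange φ), baseChange_wedgeMon]

lemma baseChange_sigMinusL (k : ℕ) (l : List ℕ) :
    baseChange φ (sigMinusL A k l) = sigMinusL B k l :=
  baseChange_lowerL φ id k l

lemma baseChange_sbarMinusL (k : ℕ) (l : List ℕ) :
    baseChange φ (sbarMinusL A k l) = sbarMinusL B k l := by
  simp [sbarMinusL_eq_negpow_lowerL, baseChange_negpow, baseChange_lowerL]

variable {F G : ℕ → List ℕ → Ext A} {F' G' : ℕ → List ℕ → Ext B}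

lemma baseChange_hsOp (hF : ∀ k l, baseChange φ (F k l) = F' k l) (k : ℕ) (u : Ext A) :
    baseChange φ (hsOp A F k u) = hsOp B F' k (baseChange φ u) := by
  have hsOn_comm (b : XB) : baseChange φ (hsOn A F k b) = hsOn B F' k b := by
    rcases b with _ | ⟨ε, s⟩
    · simp [hsOn, apply_ite (baseChange φ), baseChange_one]
    · simp [hsOn, baseChange_twist, hF]
  simp [hsOp, baseChange_linearCombination, hsOn_comm]

lemma baseChange_hsComp (hF : ∀ k l, baseChange φ (F k l) = F' k l)
    (hG : ∀ k l, baseChange φ (G k l) = G' k l) (k : ℕ) (u : Ext A) :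
    baseChange φ (hsComp A F G k u) = hsComp B F' G' k (baseChange φ u) := by
  simp [hsComp_apply, baseChange_hsOp φ hF, baseChange_hsOp φ hG]

lemma IsQuasiZero.baseChange {u : Ext A} (hu : IsQuasiZero A u) :
    IsQuasiZero B (baseChange φ u) := by
  obtain ⟨w, rfl⟩ := hu
  exact ⟨ExtSemi.baseChange φ w, by rw [map_add, baseChange_neg]⟩

lemma isQuasiZero_hsComp_of_baseChange (hF : ∀ k l, baseChange φ (F k l) = F' k l)
    (hG : ∀ k l, baseChange φ (G k l) = G' k l) {k : ℕ}
    (h : ∀ u, IsQuasiZero A (hsComp A F G k u)) (u : Ext B) :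
    IsQuasiZero B (hsComp B F' G' k u) := by
  refine isQuasiZero_of_forall_single _ (fun b => ?_) u
  have hb := (h (Finsupp.single b 1)).baseChange φ
  rwa [baseChange_hsComp φ hF hG, baseChange_single, map_one] at hb

end BaseChange

section ClassicalExterior

variable (R : Type*) [CommRing R]

/-- The classical exterior algebra on generators indexed by `ℕ`, the target of the comparison map
`toExterior`. -/
abbrev ClassicalExt : Type _ := ExteriorAlgebra R (ℕ →₀ R)

/-- The generator of the classical exterior algebra corresponding to `x^j`. -/
noncomputable def gen (j : ℕ) : ClassicalExt R := ExteriorAlgebra.ι R (Finsupp.single j 1)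

/-- The classical wedge monomial with exponents `l`. -/
noncomputable def mon (l : List ℕ) : ClassicalExt R := (l.map (gen R)).prod

variable {R}

lemma mon_cons (a : ℕ) (l : List ℕ) : mon R (a :: l) = gen R a * mon R l := by
  simp [mon]

lemma gen_mul_gen_self (a : ℕ) : gen R a * gen R a = 0 :=
  ExteriorAlgebra.ι_sq_zero _

lemma gen_mul_gen_swap (a b : ℕ) : gen R a * gen R b = -(gen R b * gen R a) :=
  eq_neg_of_add_eq_zero_left (ExteriorAlgebra.ι_add_mul_swap _ _)

lemma gen_mul_mon_of_mem {a : ℕ} {l : List ℕ} (ha : a ∈ l) : gen R a * mon R l = 0 := by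
  induction l with
  | nil => simp at ha
  | cons b l ih =>
    rw [mon_cons, ← mul_assoc]
    rcases List.mem_cons.1 ha with rfl | hal
    · rw [gen_mul_gen_self, zero_mul]
    · rw [gen_mul_gen_swap, neg_mul, mul_assoc, ih hal, mul_zero, neg_zero]

lemma gen_mul_mon_descList {a : ℕ} {t : Finset ℕ} (ha : a ∉ t) :
    gen R a * mon R (descList t) =
      (-1) ^ {b ∈ t | a < b}.card * mon R (descList (insert a t)) := by
  induction t using Finset.induction_on_max with
  | empty => simp [descList, mon]
  | insert m t hm ih =>
    have hmt : m ∉ t := fun h => lt_irrefl m (hm m h)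
    rw [Finset.mem_insert, not_or] at ha
    rcases lt_or_gt_of_ne ha.1 with ham | hma
    · have hm' : ∀ x ∈ insert a t, x < m := by
        rintro x hx
        rcases Finset.mem_insert.1 hx with rfl | hxt
        exacts [ham, hm x hxt]
      have hcard : {b ∈ insert m t | a < b}.card = {b ∈ t | a < b}.card + 1 := by
        rw [Finset.filter_insert, if_pos ham, Finset.card_insert_of_notMem (by simp [hmt])]
      rw [descList_insert hm, mon_cons, ← mul_assoc, gen_mul_gen_swap, neg_mul, mul_assoc,
        ih ha.2, Finset.insert_comm, descList_insert hm', mon_cons, hcard, pow_succ,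
        ((Commute.neg_one_right (gen R m)).pow_right _).left_comm]
      noncomm_ring
    · have hlarger : ∀ x ∈ insert m t, x < a := by
        rintro x hx
        rcases Finset.mem_insert.1 hx with rfl | hxt
        exacts [hma, (hm x hxt).trans hma]
      have hfilter : {b ∈ insert m t | a < b} = ∅ :=
        Finset.filter_eq_empty_iff.2 fun b hb => (hlarger b hb).asymm
      rw [descList_insert hlarger, mon_cons, hfilter, Finset.card_empty, pow_zero, one_mul]

variable (R) in
/-- The basis of the classical exterior algebra formed by the decreasing wedge monomials. Mathlib's
basis consists of the increasing ones, hence the reversal. -/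
noncomputable def monBasis : Module.Basis (Finset ℕ) R (ClassicalExt R) :=
  (Finsupp.basisSingleOne (R := R) (ι := ℕ)).ExteriorAlgebra.map CliffordAlgebra.reverseEquiv

lemma monBasis_apply (s : Finset ℕ) : monBasis R s = mon R (descList s) := by
  have hincr : (Finsupp.basisSingleOne (R := R) (ι := ℕ)).ExteriorAlgebra s =
      (((s.sort).map fun j => Finsupp.single j (1 : R)).map (ExteriorAlgebra.ι R)).prod := by
    rw [ExteriorAlgebra.basis_apply, ← Finset.listMap_orderEmbOfFin_finRange s rfl, List.map_map,
      List.map_map, ← List.ofFn_eq_map]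
    simp only [Function.comp_def, ← Finsupp.coe_basisSingleOne]
    exact ExteriorAlgebra.ιMulti_apply _
  rw [monBasis, Module.Basis.map_apply, hincr, CliffordAlgebra.reverseEquiv_apply]
  refine (CliffordAlgebra.reverse_prod_map_ι _).trans ?_
  rw [← List.map_reverse, ← List.map_reverse, List.map_map]
  rfl

end ClassicalExterior

section Comparison

/-- The integer `±1` encoded by a Boolean, with `true` standing for `+1`. -/
def boolSign (ε : Bool) : ℤ := if ε then 1 else -1

lemma boolSign_not (ε : Bool) : boolSign (!ε) = -boolSign ε := by
  cases ε <;> rfl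

lemma boolSign_beq_even (ε : Bool) (n : ℕ) :
    boolSign (ε == decide (Even n)) = boolSign ε * (-1) ^ n := by
  rcases n.even_or_odd with hn | hn <;> cases ε <;> simp [boolSign, hn, hn.neg_one_pow]

/-- The classical counterpart of a basis element of the exterior semialgebra. -/
noncomputable def toExteriorB : XB → ClassicalExt ℤ
  | none => 1
  | some (ε, s) => boolSign ε • mon ℤ (descList s.1)

/-- The comparison map from the exterior semialgebra over `ℕ` to the classical exterior algebra
over `ℤ`, under which the negation map becomes honest negation (away from the unit). -/
noncomputable def toExterior : Ext ℕ →ₗ[ℕ] ClassicalExt ℤ :=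
  Finsupp.linearCombination ℕ toExteriorB

lemma toExterior_bElem {t : Finset ℕ} (ht : t.Nonempty) (ε : Bool) :
    toExterior (bElem ℕ ε t) = boolSign ε • mon ℤ (descList t) := by
  simp [bElem_of_nonempty ht, toExterior, toExteriorB]

lemma toExterior_one : toExterior (one ℕ) = 1 := by
  simp [one, toExterior, toExteriorB]

lemma toExterior_wedge_xg (a : ℕ) (v : Ext ℕ) :
    toExterior (wedge ℕ (xg ℕ a) v) = gen ℤ a * toExterior v := by
  have toExterior_wB (c : XB) :
      toExterior (wB ℕ (some (true, ⟨{a}, Finset.singleton_nonempty a⟩)) c) =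
        gen ℤ a * toExteriorB c := by
    rcases c with _ | ⟨ε, s⟩
    · simp [wB, toExterior, toExteriorB, boolSign, descList, mon]
    · rw [wB_singleton, toExteriorB, mul_smul_comm]
      split_ifs with ha
      · rw [gen_mul_mon_of_mem (by simpa [descList] using ha), map_zero, smul_zero]
      · rw [toExterior_bElem (Finset.insert_nonempty _ _), gen_mul_mon_descList ha,
          boolSign_beq_even, mul_smul, Algebra.smul_def ((-1) ^ _), map_pow, map_neg, map_one]
  rw [wedge_xg]
  induction v using Finsupp.induction_linear with
  | zero => simp
  | add u v hu hv => simp [hu, hv, mul_add]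
  | single c n =>
    rw [Finsupp.linearCombination_single, map_nsmul, toExterior_wB, toExterior,
      Finsupp.linearCombination_single, mul_smul_comm]

lemma toExterior_wedgeMon (l : List ℕ) : toExterior (wedgeMon ℕ l) = mon ℤ l := by
  induction l with
  | nil => exact toExterior_one
  | cons a l ih => rw [wedgeMon_cons, toExterior_wedge_xg, ih, mon_cons]

lemma toExterior_neg {u : Ext ℕ} (hu : u none = 0) : toExterior (neg ℕ u) = -toExterior u := by
  rw [toExterior, neg, Finsupp.lmapDomain_apply, Finsupp.linearCombination_mapDomain,
    Finsupp.linearCombination_apply, Finsupp.linearCombination_apply, Finsupp.sum, Finsupp.sum,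
    ← Finset.sum_neg_distrib]
  refine Finset.sum_congr rfl fun b _ => ?_
  rcases b with _ | ⟨ε, s⟩
  · simp [hu]
  · simp [negB, toExteriorB, boolSign_not]

lemma toExterior_twist {u : Ext ℕ} (hu : u none = 0) (ε : Bool) :
    toExterior (twist ℕ ε u) = boolSign ε • toExterior u := by
  cases ε <;> simp [twist, boolSign, toExterior_neg hu]

lemma toExterior_negpow {u : Ext ℕ} (hu : u none = 0) (k : ℕ) :
    toExterior (negpow ℕ k u) = (-1) ^ k * toExterior u := by
  rcases k.even_or_odd with hk | hk
  · simp [negpow, Nat.even_iff.1 hk, hk.neg_one_pow]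
  · simp [negpow, Nat.odd_iff.1 hk, hk.neg_one_pow, toExterior_neg hu]

lemma monBasis_repr_toExteriorB (b : XB) :
    (monBasis ℤ).repr (toExteriorB b) =
      b.elim (Finsupp.single ∅ 1) fun c => Finsupp.single c.2.1 (boolSign c.1) := by
  rcases b with _ | ⟨ε, s⟩
  · have hone : (1 : ClassicalExt ℤ) = monBasis ℤ ∅ := by simp [monBasis_apply, descList, mon]
    rw [toExteriorB, hone, Module.Basis.repr_self, Option.elim_none]
  · rw [toExteriorB, ← monBasis_apply, map_smul, Module.Basis.repr_self]
    simp

lemma monBasis_repr_toExterior_empty (u : Ext ℕ) :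
    (monBasis ℤ).repr (toExterior u) ∅ = u none := by
  induction u using Finsupp.induction_linear with
  | zero => simp
  | add u v hu hv => simp [hu, hv]
  | single b n =>
    rw [toExterior, Finsupp.linearCombination_single, map_nsmul, monBasis_repr_toExteriorB]
    rcases b with _ | ⟨ε, s⟩
    · simp
    · simp [s.2.ne_empty]

lemma monBasis_repr_toExterior (u : Ext ℕ) (s : {s : Finset ℕ // s.Nonempty}) :
    (monBasis ℤ).repr (toExterior u) s = u (some (true, s)) - u (some (false, s)) := by
  induction u using Finsupp.induction_linear with
  | zero => simp
  | add u v hu hv =>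
    simp only [map_add, Finsupp.add_apply, hu, hv]
    push_cast
    ring
  | single b n =>
    rw [toExterior, Finsupp.linearCombination_single, map_nsmul, monBasis_repr_toExteriorB]
    rcases b with _ | ⟨_ | _, t⟩
    · simp [s.2.ne_empty.symm]
    · simp [boolSign, Finsupp.single_apply, Subtype.ext_iff]
    · simp [boolSign, Finsupp.single_apply, Subtype.ext_iff]

lemma isQuasiZero_of_toExterior_eq_zero {u : Ext ℕ} (hu : toExterior u = 0) :
    IsQuasiZero ℕ u := by
  refine isQuasiZero_of_apply_eq ?_ fun s => ?_
  · simpa [hu] using (monBasis_repr_toExterior_empty u).symm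
  · have hdiff := monBasis_repr_toExterior u s
    rw [hu, map_zero, Finsupp.zero_apply] at hdiff
    exact_mod_cast sub_eq_zero.1 hdiff.symm

end Comparison

section PolynomialCoefficients

open Polynomial

lemma sum_antidiagonalTuple_succ {M : Type*} [AddCommMonoid M] (n k : ℕ)
    (f : (Fin (n + 1) → ℕ) → M) :
    ∑ c ∈ Finset.Nat.antidiagonalTuple (n + 1) k, f c =
      ∑ ij ∈ Finset.HasAntidiagonal.antidiagonal k,
        ∑ c ∈ Finset.Nat.antidiagonalTuple n ij.2, f (Fin.cons ij.1 c) := by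
  rw [Finset.sum_sigma']
  refine Finset.sum_nbij' (fun c => ⟨(c 0, ∑ i, Fin.tail c i), Fin.tail c⟩)
    (fun x => Fin.cons x.1.1 x.2) ?_ ?_ ?_ ?_ ?_
  · simp [Finset.Nat.mem_antidiagonalTuple, Fin.sum_univ_succ, Fin.tail]
  · rintro ⟨⟨i, j⟩, c⟩ hc
    simp_all [Finset.Nat.mem_antidiagonalTuple, Fin.sum_univ_succ]
  · simp
  · rintro ⟨⟨i, j⟩, c⟩ hc
    simp_all [Finset.Nat.mem_antidiagonalTuple]
  · simp

lemma coeff_prod_ofFn {S : Type*} [Semiring S] {n : ℕ} (p : Fin n → S[X]) (k : ℕ) :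
    (List.ofFn p).prod.coeff k =
      ∑ c ∈ Finset.Nat.antidiagonalTuple n k, (List.ofFn fun i => (p i).coeff (c i)).prod := by
  induction n generalizing k with
  | zero => rcases k with _ | k <;> simp [coeff_one]
  | succ n ih =>
    simp only [List.ofFn_succ, List.prod_cons, coeff_mul, ih, Finset.mul_sum,
      sum_antidiagonalTuple_succ, Fin.cons_zero, Fin.cons_succ]

lemma mul_self_eq_zero_of_coeff_mem_range_ι {R M : Type*} [CommRing R] [AddCommGroup M]
    [Module R M] {p : (ExteriorAlgebra R M)[X]}
    (hp : ∀ k, p.coeff k ∈ LinearMap.range (ExteriorAlgebra.ι R (M := M))) : p * p = 0 := by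
  ext k
  rw [coeff_mul, coeff_zero]
  refine Finset.sum_involution (fun ij _ => ij.swap) ?_ ?_ ?_ ?_
  · rintro ⟨i, j⟩ -
    obtain ⟨m, hm⟩ := hp i
    obtain ⟨m', hm'⟩ := hp j
    simp only [Prod.swap_prod_mk, ← hm, ← hm', ExteriorAlgebra.ι_add_mul_swap]
  · rintro ⟨i, j⟩ - hne hswap
    obtain rfl : j = i := congrArg Prod.fst hswap
    obtain ⟨m, hm⟩ := hp j
    exact hne (by simp only [← hm, ExteriorAlgebra.ι_sq_zero])
  · simp [add_comm]
  · simp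

variable {R S : Type*} [CommSemiring R] [Semiring S] [Algebra R S]

/-- The extension of `D : S →ₐ[R] S[X]` to `S[X]` fixing `X`, which allows two such homomorphisms
to be composed. -/
noncomputable def extendX (D : S →ₐ[R] S[X]) : S[X] →ₐ[R] S[X] where
  toRingHom := eval₂RingHom' D.toRingHom X fun _ => (commute_X _).symm
  commutes' r := by simp [Polynomial.algebraMap_apply]

lemma extendX_C (D : S →ₐ[R] S[X]) (a : S) : extendX D (C a) = D a :=
  eval₂_C _ _

lemma extendX_X (D : S →ₐ[R] S[X]) : extendX D X = X :=
  eval₂_X _ _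

lemma coeff_extendX (D : S →ₐ[R] S[X]) (p : S[X]) (k : ℕ) :
    (extendX D p).coeff k = ∑ j ∈ Finset.range (k + 1), (D (p.coeff (k - j))).coeff j := by
  induction p using Polynomial.induction_on' with
  | add p q hp hq => simp [hp, hq, Finset.sum_add_distrib]
  | monomial n a =>
    rw [← C_mul_X_pow_eq_monomial, map_mul, map_pow, extendX_C, extendX_X, coeff_mul_X_pow',
      C_mul_X_pow_eq_monomial]
    split_ifs with hnk
    · rw [Finset.sum_eq_single_of_mem (k - n) (Finset.mem_range.2 (by omega))]
      · rw [Nat.sub_sub_self hnk, coeff_monomial_same]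
      · intro j hj hne
        rw [coeff_monomial_of_ne _ (by grind), map_zero, coeff_zero]
    · refine (Finset.sum_eq_zero fun j _ => ?_).symm
      rw [coeff_monomial_of_ne _ (by omega), map_zero, coeff_zero]

end PolynomialCoefficients

section Lowering

open Polynomial

variable (R : Type*) [CommRing R]

/-- The polynomial `∑_{c ≤ b j} ε ^ c x^{j - c} X ^ c`, where `X` stands for `w⁻¹`. -/
noncomputable def lowerGen (b : ℕ → ℕ) (ε : R) (j : ℕ) : (ClassicalExt R)[X] :=
  ∑ c ∈ Finset.range (b j + 1), monomial c (ε ^ c • gen R (j - c))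

variable {R}

lemma coeff_lowerGen (b : ℕ → ℕ) (ε : R) (j c : ℕ) :
    (lowerGen R b ε j).coeff c = (if c ≤ b j then ε ^ c else 0) • gen R (j - c) := by
  simp [lowerGen, coeff_monomial, ite_smul]

lemma lowerGen_linearCombination_mul_self (b : ℕ → ℕ) (ε : R) (m : ℕ →₀ R) :
    Finsupp.linearCombination R (lowerGen R b ε) m *
      Finsupp.linearCombination R (lowerGen R b ε) m = 0 := by
  refine mul_self_eq_zero_of_coeff_mem_range_ι fun k => ?_
  rw [Finsupp.linearCombination_apply, Finsupp.sum, finsetSum_coeff]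
  refine Submodule.sum_mem _ fun j _ => ?_
  rw [coeff_smul, coeff_lowerGen]
  exact Submodule.smul_mem _ _ (Submodule.smul_mem _ _ (LinearMap.mem_range_self _ _))

variable (R) in
/-- The Hasse–Schmidt derivation on the classical exterior algebra sending `x^j` to
`lowerGen R b ε j`. -/
noncomputable def lowerHom (b : ℕ → ℕ) (ε : R) : ClassicalExt R →ₐ[R] (ClassicalExt R)[X] :=
  ExteriorAlgebra.lift R
    ⟨Finsupp.linearCombination R (lowerGen R b ε), lowerGen_linearCombination_mul_self b ε⟩

lemma lowerHom_gen (b : ℕ → ℕ) (ε : R) (j : ℕ) :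
    lowerHom R b ε (gen R j) = lowerGen R b ε j := by
  simp [lowerHom, gen]

lemma coeff_lowerHom_mon (b : ℕ → ℕ) (ε : R) (l : List ℕ) (k : ℕ) :
    (lowerHom R b ε (mon R l)).coeff k =
      ε ^ k • ∑ c ∈ Finset.Nat.antidiagonalTuple l.length k,
        if ∀ i, c i ≤ b (l.get i) then
          mon R (List.ofFn fun i : Fin l.length => l.get i - c i)
        else 0 := by
  have hprod : lowerHom R b ε (mon R l) =
      (List.ofFn fun i : Fin l.length => lowerGen R b ε (l.get i)).prod := by
    conv_lhs => rw [← List.ofFn_get l]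
    simp [mon, map_list_prod, Function.comp_def, lowerHom_gen]
  rw [hprod, coeff_prod_ofFn, Finset.smul_sum]
  refine Finset.sum_congr rfl fun c hc => ?_
  have hmon (f : Fin l.length → ℕ) :
      mon R (List.ofFn f) = MultilinearMap.mkPiAlgebraFin R _ _ fun i => gen R (f i) := by
    simp [mon, List.map_ofFn, Function.comp_def]
  simp only [coeff_lowerGen]
  rw [← MultilinearMap.mkPiAlgebraFin_apply (R := R), MultilinearMap.map_smul_univ, ← hmon,
    Finset.prod_ite_zero, Finset.prod_pow_eq_pow_sum, Finset.Nat.mem_antidiagonalTuple.1 hc]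
  simp [ite_smul]

lemma lowerHom_id_gen_zero : lowerHom R id 1 (gen R 0) = C (gen R 0) := by
  simp [lowerHom_gen, lowerGen]

lemma lowerHom_id_gen_succ (j : ℕ) :
    lowerHom R id 1 (gen R (j + 1)) =
      C (gen R (j + 1)) + lowerHom R id 1 (gen R j) * X := by
  simp only [lowerHom_gen, lowerGen, id_eq, one_pow, one_smul]
  rw [Finset.sum_range_succ', add_comm, Finset.sum_mul]
  simp [monomial_mul_X]

lemma lowerHom_min_one_gen_zero (ε : R) : lowerHom R (min 1) ε (gen R 0) = C (gen R 0) := by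
  simp [lowerHom_gen, lowerGen]

lemma lowerHom_min_one_gen_succ (ε : R) (j : ℕ) :
    lowerHom R (min 1) ε (gen R (j + 1)) = C (gen R (j + 1)) + ε • (C (gen R j) * X) := by
  rw [lowerHom_gen, lowerGen, min_eq_left (Nat.le_add_left 1 j), Finset.sum_range_succ,
    Finset.sum_range_one, C_mul_X_eq_monomial, smul_monomial]
  simp

lemma algHom_ext_gen {S : Type*} [Ring S] [Algebra R S] {f g : ClassicalExt R →ₐ[R] S}
    (h : ∀ j, f (gen R j) = g (gen R j)) : f = g :=
  ExteriorAlgebra.hom_ext (Finsupp.lhom_ext' fun j => LinearMap.ext_ring (h j))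

lemma extendX_lowerHom_id_lowerHom_min_one (e : ClassicalExt R) :
    extendX (lowerHom R id 1) (lowerHom R (min 1) (-1) e) = C e := by
  suffices (extendX (lowerHom R id 1)).comp (lowerHom R (min 1) (-1)) = CAlgHom from
    DFunLike.congr_fun this e
  refine algHom_ext_gen fun j => ?_
  rcases j with _ | j
  · simp [lowerHom_min_one_gen_zero, extendX_C, lowerHom_id_gen_zero]
  · simp [lowerHom_min_one_gen_succ, extendX_C, extendX_X, lowerHom_id_gen_succ]

lemma extendX_lowerHom_min_one_lowerHom_id (e : ClassicalExt R) :
    extendX (lowerHom R (min 1) (-1)) (lowerHom R id 1 e) = C e := by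
  suffices (extendX (lowerHom R (min 1) (-1))).comp (lowerHom R id 1) = CAlgHom from
    DFunLike.congr_fun this e
  refine algHom_ext_gen fun j => ?_
  rw [AlgHom.comp_apply, CAlgHom_apply]
  induction j with
  | zero => rw [lowerHom_id_gen_zero, extendX_C, lowerHom_min_one_gen_zero]
  | succ j ih =>
    rw [lowerHom_id_gen_succ, map_add, map_mul, ih, extendX_C, extendX_X,
      lowerHom_min_one_gen_succ]
    simp

end Lowering

section ClassicalModel

open Polynomial

/-- The coefficient family `F` over `ℕ` models the classical Hasse–Schmidt derivation `D`, i.e. the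
two correspond under `toExterior`. The empty list is excluded because `hsOn` ignores `F` on the
unit. -/
structure IsModelOf (F : ℕ → List ℕ → Ext ℕ) (D : ClassicalExt ℤ →ₐ[ℤ] (ClassicalExt ℤ)[X]) :
    Prop where
  apply_none {l : List ℕ} (hl : l ≠ []) (k : ℕ) : F k l none = 0
  toExterior_eq {l : List ℕ} (hl : l ≠ []) (k : ℕ) : toExterior (F k l) = (D (mon ℤ l)).coeff k

lemma coeff_lowerHom_mon_eq_toExterior (b : ℕ → ℕ) (ε : ℤ) (l : List ℕ) (k : ℕ) :
    (lowerHom ℤ b ε (mon ℤ l)).coeff k = ε ^ k • toExterior (lowerL ℕ b k l) := by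
  simp [coeff_lowerHom_mon, lowerL, apply_ite toExterior, toExterior_wedgeMon]

lemma isModelOf_sigMinusL : IsModelOf (sigMinusL ℕ) (lowerHom ℤ id 1) where
  apply_none hl k := lowerL_apply_none id k hl
  toExterior_eq _ k := by
    rw [coeff_lowerHom_mon_eq_toExterior, one_pow, one_smul, sigMinusL_eq_lowerL]

lemma isModelOf_sbarMinusL : IsModelOf (sbarMinusL ℕ) (lowerHom ℤ (min 1) (-1)) where
  apply_none hl k := by
    rw [sbarMinusL_eq_negpow_lowerL, negpow]
    split_ifs
    · exact lowerL_apply_none _ k hl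
    · rw [neg_apply, negB, lowerL_apply_none _ k hl]
  toExterior_eq hl k := by
    rw [coeff_lowerHom_mon_eq_toExterior, sbarMinusL_eq_negpow_lowerL,
      toExterior_negpow (lowerL_apply_none _ k hl), Algebra.smul_def, map_pow, map_neg, map_one]

lemma IsModelOf.toExterior_hsOp {F : ℕ → List ℕ → Ext ℕ}
    {D : ClassicalExt ℤ →ₐ[ℤ] (ClassicalExt ℤ)[X]} (hF : IsModelOf F D) (k : ℕ) (u : Ext ℕ) :
    toExterior (hsOp ℕ F k u) = (D (toExterior u)).coeff k := by
  have toExterior_hsOn (b : XB) : toExterior (hsOn ℕ F k b) = (D (toExteriorB b)).coeff k := by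
    rcases b with _ | ⟨ε, s⟩
    · simp [hsOn, toExteriorB, coeff_one, apply_ite toExterior, toExterior_one]
    · have hs : descList s.1 ≠ [] := by
        obtain ⟨a, ha⟩ := s.2
        exact List.ne_nil_of_mem (a := a) (by simpa [descList] using ha)
      rw [hsOn, toExterior_twist (hF.apply_none hs k), hF.toExterior_eq hs, toExteriorB, map_smul,
        coeff_smul]
  induction u using Finsupp.induction_linear with
  | zero => simp
  | add u v hu hv => simp [hu, hv]
  | single b n =>
    rw [hsOp, Finsupp.linearCombination_single, map_nsmul, toExterior_hsOn, toExterior,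
      Finsupp.linearCombination_single, map_nsmul, coeff_smul]

lemma isQuasiZero_hsComp_of_isModelOf {F G : ℕ → List ℕ → Ext ℕ}
    {D D' : ClassicalExt ℤ →ₐ[ℤ] (ClassicalExt ℤ)[X]} (hF : IsModelOf F D) (hG : IsModelOf G D')
    (hinv : ∀ e, extendX D (D' e) = C e) {k : ℕ} (hk : k ≠ 0) (u : Ext ℕ) :
    IsQuasiZero ℕ (hsComp ℕ F G k u) := by
  apply isQuasiZero_of_toExterior_eq_zero
  calc
    toExterior (hsComp ℕ F G k u)
    _ = (extendX D (D' (toExterior u))).coeff k := by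
      simp only [hsComp_apply, map_sum, hF.toExterior_hsOp, hG.toExterior_hsOp, coeff_extendX]
    _ = 0 := by rw [hinv, coeff_C_of_ne_zero hk]

end ClassicalModel

section Inverse

variable {A : Type*} [CommSemiring A]

lemma isQuasiZero_sigMinus_sbarMinus {k : ℕ} (hk : k ≠ 0) (x : Ext A) :
    IsQuasiZero A (∑ j ∈ Finset.range (k + 1), sigMinus A j (sbarMinus A (k - j) x)) := by
  have hcomp := isQuasiZero_hsComp_of_baseChange (Nat.castRingHom A)
    (baseChange_sigMinusL _) (baseChange_sbarMinusL _)
    (isQuasiZero_hsComp_of_isModelOf isModelOf_sigMinusL isModelOf_sbarMinusL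
      extendX_lowerHom_id_lowerHom_min_one hk) x
  rwa [hsComp_apply] at hcomp

lemma isQuasiZero_sbarMinus_sigMinus {k : ℕ} (hk : k ≠ 0) (x : Ext A) :
    IsQuasiZero A (∑ j ∈ Finset.range (k + 1), sbarMinus A j (sigMinus A (k - j) x)) := by
  have hcomp := isQuasiZero_hsComp_of_baseChange (Nat.castRingHom A)
    (baseChange_sbarMinusL _) (baseChange_sigMinusL _)
    (isQuasiZero_hsComp_of_isModelOf isModelOf_sbarMinusL isModelOf_sigMinusL
      extendX_lowerHom_min_one_lowerHom_id hk) x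
  rwa [hsComp_apply] at hcomp

end Inverse

theorem sigMinus_sbarMinus_quasi_inverse_general (A : Type*) [CommSemiring A] (x : Ext A) :
    (Prec A x (sigMinus A 0 (sbarMinus A 0 x))) ∧
    (∀ k : ℕ, 1 ≤ k →
      IsQuasiZero A (∑ j ∈ Finset.range (k + 1), sigMinus A j (sbarMinus A (k - j) x))) ∧
    (Prec A x (sbarMinus A 0 (sigMinus A 0 x))) ∧
    (∀ k : ℕ, 1 ≤ k →
      IsQuasiZero A (∑ j ∈ Finset.range (k + 1), sbarMinus A j (sigMinus A (k - j) x))) := by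
  refine ⟨?_, fun k hk => isQuasiZero_sigMinus_sbarMinus (Nat.ne_zero_of_lt hk) x,
    ?_, fun k hk => isQuasiZero_sbarMinus_sigMinus (Nat.ne_zero_of_lt hk) x⟩
  · rw [sbarMinus_zero, sigMinus_zero]
    exact prec_refl x
  · rw [sigMinus_zero, sbarMinus_zero]
    exact prec_refl x

/-- For every `r ≥ 1` and every partition `λ` with at most `r`
parts, the Schubert derivations `σ₋(w)` and `σ̄₋(w)` are mutually quasi-inverse
on `[x]^r_λ`: in each composite (coefficientwise convolution in `w^{−k}`) the
coefficient of `w^0` equals `[x]^r_λ` plus possibly a quasi-zero, and the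
coefficient of `w^{−k}`, `k ≥ 1`, is a quasi-zero; i.e.
`σ₋(w)(σ̄₋(w)[x]^r_λ) ⪰ [x]^r_λ` and `σ̄₋(w)(σ₋(w)[x]^r_λ) ⪰ [x]^r_λ`. -/
theorem sigMinus_sbarMinus_quasi_inverse (A : Type*) [CommSemiring A]
    (r : ℕ) (hr : 1 ≤ r) (lam : Fin r → ℕ) (hlam : Antitone lam) :
    (Prec A (xlam A r lam) (sigMinus A 0 (sbarMinus A 0 (xlam A r lam)))) ∧
    (∀ k : ℕ, 1 ≤ k →
      IsQuasiZero A
        (∑ j ∈ Finset.range (k + 1), sigMinus A j (sbarMinus A (k - j) (xlam A r lam)))) ∧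
    (Prec A (xlam A r lam) (sbarMinus A 0 (sigMinus A 0 (xlam A r lam)))) ∧
    (∀ k : ℕ, 1 ≤ k →
      IsQuasiZero A
        (∑ j ∈ Finset.range (k + 1), sbarMinus A j (sigMinus A (k - j) (xlam A r lam)))) :=
  sigMinus_sbarMinus_quasi_inverse_general A (xlam A r lam)

end ExtSemi
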